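/- For every fixed N ∈ ℕ there exist constants C, x₀ > 0 such that for all 0 < x < x₀, |Σ_{n≥1} λ(n)/(e^{nπx}+1) + (√2−1)/(2√x) − 1/2| ≤ C·x^N. -/

import Mathlib

open Real

/-- The Liouville function `λ(n) = (-1)^Ω(n)`. -/
def liouville (n : ℕ) : ℤ := (-1) ^ n.primeFactorsList.length

theorem liouville_eq_af {n : ℕ} (h : n ≠ 0) :
    liouville n = ArithmeticFunction.liouville n := by
  rw [ArithmeticFunction.liouville_apply h, ArithmeticFunction.cardFactors_apply]; rfl

open Classical in
/-- indicator of nonzero squares -/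
noncomputable def sqInd : ArithmeticFunction ℤ where
  toFun n := if n = 0 then 0 else if IsSquare n then 1 else 0
  map_zero' := by simp

theorem sqInd_apply {n : ℕ} (h : n ≠ 0) [Decidable (IsSquare n)] :
    sqInd n = if IsSquare n then 1 else 0 := by
  show (if n = 0 then (0:ℤ) else _) = _
  rw [if_neg h]; congr

theorem isSquare_left_of_coprime {m n : ℕ} (h : m.Coprime n) (hs : IsSquare (m * n)) :
    IsSquare m := by
  obtain ⟨c, hc⟩ := hs
  have hu : IsUnit (gcd m n) := by
    have h' : Nat.gcd m n = 1 := h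
    exact Nat.isUnit_iff.2 h'
  obtain ⟨d, hd⟩ := exists_eq_pow_of_mul_eq_pow hu (hc.trans (sq c).symm)
  exact ⟨d, by rw [hd, sq]⟩

theorem isMultiplicative_sqInd : sqInd.IsMultiplicative := by
  classical
  rw [ArithmeticFunction.IsMultiplicative.iff_ne_zero]
  refine ⟨by rw [sqInd_apply one_ne_zero]; simp, ?_⟩
  intro m n hm hn h
  rw [sqInd_apply hm, sqInd_apply hn, sqInd_apply (mul_ne_zero hm hn)]
  by_cases h1 : IsSquare m
  · by_cases h2 : IsSquare n
    · simp [h1, h2, h1.mul h2]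
    · have : ¬ IsSquare (m * n) := fun hs =>
        h2 (isSquare_left_of_coprime h.symm (by rwa [mul_comm]))
      simp [h2, this]
  · have : ¬ IsSquare (m * n) := fun hs => h1 (isSquare_left_of_coprime h hs)
    simp [h1, this]

theorem zeta_mul_liouville :
    ((ArithmeticFunction.zeta : ArithmeticFunction ℕ) : ArithmeticFunction ℤ) *
      ArithmeticFunction.liouville = sqInd := by
  classical
  rw [ArithmeticFunction.IsMultiplicative.eq_iff_eq_on_prime_powers _
    (ArithmeticFunction.isMultiplicative_zeta.natCast.mul
      ArithmeticFunction.isMultiplicative_liouville) _ isMultiplicative_sqInd]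
  intro p i hp
  rw [ArithmeticFunction.coe_zeta_mul_apply, Nat.sum_divisors_prime_pow hp,
    sqInd_apply (pow_ne_zero _ hp.ne_zero)]
  have : ∀ k ∈ Finset.range (i + 1), ArithmeticFunction.liouville (p ^ k) = (-1) ^ k := by
    intro k _
    rw [ArithmeticFunction.liouville_apply (pow_ne_zero _ hp.ne_zero),
      ArithmeticFunction.cardFactors_apply_prime_pow hp]
  rw [Finset.sum_congr rfl this, neg_one_geom_sum]
  have key : IsSquare (p ^ i) ↔ Even i := by
    constructor
    · rintro ⟨c, hc⟩
      have h1 := congrArg ArithmeticFunction.cardFactors hc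
      have hc0 : c ≠ 0 := by
        rintro rfl
        exact pow_ne_zero i hp.ne_zero (by simpa using hc)
      rw [ArithmeticFunction.cardFactors_apply_prime_pow hp,
        ArithmeticFunction.cardFactors_mul hc0 hc0] at h1
      exact ⟨_, h1⟩
    · intro h
      obtain ⟨k, rfl⟩ := h
      exact ⟨p ^ k, pow_add p k k⟩
  by_cases h : Even i
  · simp [key, h, Nat.even_add_one]
  · simp [key, h, Nat.even_add_one]

theorem sum_div_liouville [DecidablePred (IsSquare : ℕ → Prop)] {n : ℕ} (h : n ≠ 0) :
    ∑ d ∈ n.divisors, liouville d = if IsSquare n then 1 else 0 := by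
  rw [← sqInd_apply h, ← zeta_mul_liouville, ArithmeticFunction.coe_zeta_mul_apply]
  refine Finset.sum_congr rfl fun d hd => liouville_eq_af ?_
  exact (Nat.pos_of_mem_divisors hd).ne'

theorem abs_liouville (n : ℕ) : |(liouville n : ℝ)| = 1 := by
  simp [liouville]

theorem summable_prod {q : ℝ} (h0 : 0 < q) (h1 : q < 1) :
    Summable fun c : ℕ+ × ℕ+ => (liouville c.1 : ℝ) * q ^ (c.1 * c.2 : ℕ) := by
  have := summable_prod_mul_pow (𝕜 := ℝ) 0 (r := q) (by rw [norm_eq_abs, abs_of_pos h0]; exact h1)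
  refine Summable.of_norm_bounded this fun c => ?_
  rw [norm_mul, norm_eq_abs, abs_liouville, norm_eq_abs, abs_of_pos (by positivity)]
  simp

theorem tsum_geom_pnat {q : ℝ} (h0 : 0 < q) (h1 : q < 1) (n : ℕ+) :
    ∑' c : ℕ+, q ^ (n * c : ℕ) = q ^ (n : ℕ) / (1 - q ^ (n : ℕ)) := by
  rw [tsum_pnat_eq_tsum_succ (f := fun c => q ^ ((n : ℕ) * c))]
  have hq : q ^ (n : ℕ) < 1 := pow_lt_one₀ h0.le h1 n.ne_zero
  simp_rw [pow_mul, pow_succ]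
  rw [tsum_mul_right, tsum_geometric_of_lt_one (by positivity) hq]
  rw [div_eq_mul_inv, mul_comm]

theorem summable_lambert {q : ℝ} (h0 : 0 < q) (h1 : q < 1) :
    Summable fun n : ℕ => (liouville (n + 1) : ℝ) * (q ^ (n + 1) / (1 - q ^ (n + 1))) := by
  have := (summable_prod h0 h1).prod
  simp only [tsum_mul_left, tsum_geom_pnat h0 h1] at this
  exact (summable_pnat_iff_summable_succ
    (f := fun n => (liouville n : ℝ) * (q ^ n / (1 - q ^ n)))).1 this

theorem lambert {q : ℝ} (h0 : 0 < q) (h1 : q < 1) :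
    ∑' n : ℕ, (liouville (n + 1) : ℝ) * (q ^ (n + 1) / (1 - q ^ (n + 1))) =
      ∑' j : ℕ, q ^ ((j + 1) ^ 2) := by
  classical
  have hs := summable_prod h0 h1
  have e1 := hs.tsum_prod
  simp only [tsum_mul_left, tsum_geom_pnat h0 h1] at e1
  rw [tsum_pnat_eq_tsum_succ (f := fun n => (liouville n : ℝ) * (q ^ n / (1 - q ^ n)))] at e1
  rw [← e1, ← sigmaAntidiagonalEquivProd.tsum_eq]
  refine (Summable.tsum_sigma (sigmaAntidiagonalEquivProd.summable_iff.2 hs)).trans ?_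
  simp only [Function.comp_apply]
  have e2 : ∀ n : ℕ+, (∑' c : ((n : ℕ).divisorsAntidiagonal),
      (liouville (sigmaAntidiagonalEquivProd ⟨n, c⟩).1 : ℝ) *
      q ^ ((sigmaAntidiagonalEquivProd ⟨n, c⟩).1 * (sigmaAntidiagonalEquivProd ⟨n, c⟩).2 : ℕ))
      = (if IsSquare (n : ℕ) then 1 else 0) * q ^ (n : ℕ) := by
    intro n
    have := sum_div_liouville n.ne_zero
    rw [tsum_fintype]
    have e3 : ((if IsSquare (n : ℕ) then 1 else 0 : ℝ)) =
        ∑ c : ((n : ℕ).divisorsAntidiagonal), (liouville c.1.1 : ℝ) := by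
      rw [Finset.univ_eq_attach,
        Finset.sum_attach (n : ℕ).divisorsAntidiagonal fun x : ℕ × ℕ => (liouville x.1 : ℝ),
        Nat.sum_divisorsAntidiagonal (fun x _ => (liouville x : ℝ))]
      exact_mod_cast this.symm
    rw [e3, Finset.sum_mul]
    refine Finset.sum_congr rfl fun c _ => ?_
    have hc := (Nat.mem_divisorsAntidiagonal.1 c.2).1
    show (liouville c.1.1 : ℝ) * q ^ (c.1.1 * c.1.2) = _
    rw [hc]
  rw [tsum_congr e2]
  have hinj : Function.Injective (fun j : ℕ => (Nat.succPNat j) ^ 2) := by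
    intro a b hab
    have := congrArg PNat.val hab
    simpa using! this
  rw [← hinj.tsum_eq]
  · refine tsum_congr fun j => ?_
    simp [sq]
  · intro n hn
    have hsq : IsSquare (n : ℕ) := by
      by_contra hh
      exact hn (by simp [hh])
    obtain ⟨r, hr⟩ := hsq
    have : r ≠ 0 := by
      rintro rfl
      exact n.ne_zero (by simpa using hr)
    obtain ⟨k, rfl⟩ := Nat.exists_eq_succ_of_ne_zero this
    exact ⟨k, by apply PNat.coe_injective; rw [hr]; simp [sq]⟩

/-- the real theta function -/
noncomputable def th (x : ℝ) : ℝ := ∑' n : ℤ, exp (-π * x * (n : ℝ) ^ 2)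

theorem th_eq_jacobi (x : ℝ) : (th x : ℂ) = jacobiTheta (Complex.I * x) := by
  unfold th jacobiTheta
  rw [Complex.ofReal_tsum]
  refine tsum_congr fun n => ?_
  push_cast
  congr 1
  linear_combination (-π * x * (n : ℂ) ^ 2) * Complex.I_sq

theorem th_sub_one {x : ℝ} (hx : 0 < x) : ∑' j : ℕ, exp (-π * x) ^ ((j + 1) ^ 2) = (th x - 1) / 2 := by
  have := (hasSum_nat_jacobiTheta (τ := Complex.I * x) (by simpa using hx)).tsum_eq
  rw [← th_eq_jacobi] at this
  rw [← Complex.ofReal_inj, Complex.ofReal_tsum]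
  push_cast
  rw [← this]
  refine tsum_congr fun n => ?_
  rw [← Complex.exp_nat_mul]
  congr 1
  push_cast
  linear_combination (-π * x * ((n : ℂ) + 1) ^ 2) * Complex.I_sq

theorem th_inv {x : ℝ} (hx : 0 < x) : th x = 1 / √x * th (1 / x) := by
  unfold th
  rw [Real.tsum_exp_neg_mul_int_sq hx, Real.sqrt_eq_rpow]
  congr 1
  refine tsum_congr fun n => ?_
  congr 1
  ring

theorem th_bound {y : ℝ} (hy : 1 / 2 ≤ y) : |th y - 1| ≤ 4 * exp (-π * y) := by
  have h := norm_jacobiTheta_sub_one_le (τ := Complex.I * y) (by simp; linarith)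
  rw [← th_eq_jacobi] at h
  have e : ‖(th y : ℂ) - 1‖ = |th y - 1| := by
    rw [← norm_eq_abs, ← Complex.norm_real]; simp
  rw [e] at h
  simp only [Complex.mul_im, Complex.I_re, Complex.I_im, Complex.ofReal_im, Complex.ofReal_re, zero_mul, one_mul, zero_add] at h
  refine h.trans (mul_le_mul_of_nonneg_right ?_ (exp_pos _).le)
  have : exp (-π * y) ≤ 1 / 2 := by
    have h1 : exp (-π * y) ≤ exp (-1) := by
      apply exp_le_exp.2
      nlinarith [pi_gt_three]
    have h2 := Real.exp_neg_one_lt_half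
    linarith
  rw [div_le_iff₀ (by linarith)]
  linarith

theorem S_eq {x : ℝ} (hx : 0 < x) :
    (∑' n : ℕ, (liouville (n + 1) : ℝ) / (Real.exp (((n : ℝ) + 1) * π * x) + 1)) =
      1 / 2 + th x / 2 - th (2 * x) := by
  have lt : ∀ {y : ℝ}, 0 < y → exp (-π * y) < 1 := fun hy => by
    rw [exp_lt_one_iff]; nlinarith [pi_pos]
  have hx2 : 0 < 2 * x := by linarith
  have l1 := lambert (exp_pos _) (lt hx)
  have l2 := lambert (exp_pos _) (lt hx2)
  rw [th_sub_one hx] at l1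
  rw [th_sub_one hx2] at l2
  have s1 := summable_lambert (exp_pos _) (lt hx)
  have s2 := (summable_lambert (exp_pos _) (lt hx2)).mul_left 2
  have : 1 / 2 + th x / 2 - th (2 * x) = (th x - 1) / 2 - 2 * ((th (2 * x) - 1) / 2) := by ring
  rw [this, ← l1, ← l2, ← tsum_mul_left, ← s1.tsum_sub s2]
  refine tsum_congr fun n => ?_
  have e1 : exp (-π * (2 * x)) = exp (-π * x) ^ 2 := by
    rw [← exp_nat_mul]; congr 1; push_cast; ring
  have e2 : exp (((n : ℝ) + 1) * π * x) = (exp (-π * x) ^ (n + 1))⁻¹ := by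
    rw [← exp_nat_mul, ← exp_neg]; congr 1; push_cast; ring
  rw [e1, e2, ← pow_mul, mul_comm 2 (n + 1), pow_mul]
  have hq : exp (-π * x) ^ (n + 1) < 1 := pow_lt_one₀ (exp_pos _).le (lt hx) (by simp)
  have hq0 : 0 < exp (-π * x) ^ (n + 1) := by positivity
  generalize exp (-π * x) ^ (n + 1) = q at hq hq0
  have a1 : 1 - q ≠ 0 := by linarith
  have a2 : 1 + q ≠ 0 := by linarith
  have a3 : 1 - q ^ 2 ≠ 0 := by
    have : 1 - q ^ 2 = (1 - q) * (1 + q) := by ring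
    rw [this]; exact mul_ne_zero a1 a2
  have a4 : q⁻¹ + 1 = (1 + q) / q := by field_simp
  rw [a4]
  field_simp
  ring

theorem main_theorem (N : ℕ) :
    ∃ C x₀ : ℝ, 0 < C ∧ 0 < x₀ ∧ ∀ x : ℝ, 0 < x → x < x₀ →
      |(∑' n : ℕ, (liouville (n + 1) : ℝ) / (Real.exp (((n : ℝ) + 1) * π * x) + 1)) +
          (Real.sqrt 2 - 1) / (2 * Real.sqrt x) - 1 / 2| ≤ C * x ^ N := by
  refine ⟨8 * (N + 1).factorial, 1, by positivity, one_pos, fun x hx hx1 => ?_⟩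
  have hx2 : 0 < 2 * x := by linarith
  have hs : 0 < √x := sqrt_pos.2 hx
  have h2 : √2 * √2 = 2 := mul_self_sqrt (by norm_num)
  have h2p : 1 ≤ √2 := by rw [one_le_sqrt]; norm_num
  have hss : √x * √x = x := mul_self_sqrt hx.le
  have hs1 : √x ≤ 1 := by rw [sqrt_le_one]; exact hx1.le
  have i1 : 1 ≤ 1 / x := by rw [le_div_iff₀ hx]; linarith
  have i2 : 1 / (2 * x) = (1 / x) / 2 := by field_simp
  have b1 := th_bound (y := 1 / x) (by linarith)
  have b2 := th_bound (y := 1 / (2 * x)) (by linarith)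
  have hm : exp (-π * (1 / x)) ≤ exp (-π * (1 / (2 * x))) := by
    apply exp_le_exp.2; rw [i2]; nlinarith [pi_pos]
  rw [S_eq hx, th_inv hx, th_inv hx2, sqrt_mul (by norm_num) x]
  have eq : 1 / 2 + 1 / √x * th (1 / x) / 2 - 1 / (√2 * √x) * th (1 / (2 * x)) +
      (√2 - 1) / (2 * √x) - 1 / 2 =
      (1 / √x) * ((th (1 / x) - 1) / 2 - (th (1 / (2 * x)) - 1) / √2) := by
    field_simp
    linear_combination h2
  rw [eq, abs_mul, abs_of_pos (by positivity : 0 < 1 / √x)]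
  have b3 : |(th (1 / x) - 1) / 2 - (th (1 / (2 * x)) - 1) / √2| ≤
      8 * exp (-π * (1 / (2 * x))) := by
    refine (abs_sub _ _).trans ?_
    rw [abs_div, abs_div, abs_of_pos (by norm_num : (0:ℝ) < 2), abs_of_pos (by linarith : 0 < √2)]
    have := div_le_self (abs_nonneg (th (1 / (2 * x)) - 1)) h2p
    have := abs_nonneg (th (1 / x) - 1)
    linarith
  have b4 : exp (-π * (1 / (2 * x))) ≤ (N + 1).factorial * x ^ (N + 1) := by
    have c1 : exp (-π * (1 / (2 * x))) ≤ exp (-(1 / x)) := by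
      apply exp_le_exp.2; rw [i2]; nlinarith [pi_gt_three]
    have c2 := pow_div_factorial_le_exp (1 / x) (by positivity) (N + 1)
    refine c1.trans ?_
    rw [exp_neg, inv_le_comm₀ (exp_pos _) (by positivity)]
    refine le_of_eq_of_le ?_ c2
    rw [one_div, inv_pow, mul_inv, div_eq_mul_inv, mul_comm]
  have b5 : 1 / √x * x ≤ 1 := by
    rw [one_div_mul_eq_div, div_le_one hs]; nlinarith
  calc 1 / √x * |(th (1 / x) - 1) / 2 - (th (1 / (2 * x)) - 1) / √2|
      ≤ 1 / √x * (8 * ((N + 1).factorial * x ^ (N + 1))) := by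
        gcongr; linarith
    _ = (8 * (N + 1).factorial * x ^ N) * (1 / √x * x) := by ring
    _ ≤ (8 * (N + 1).factorial * x ^ N) * 1 := by gcongr
    _ = _ := by ring
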